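/- If P is a mem-basic form over A and a ∈ α̃(P), then CP_cl ⊢ P = ℓ_a(P) ◁ a ▷ r_a(P). -/

import Mathlib

/-- Conditional expressions over a set `A` of atoms: constants T, F, atoms, and the
ternary conditional `cond P Q R` read `P ◁ Q ▷ R` ("if Q then P else R"). -/
inductive Expr (A : Type) : Type
  | T : Expr A
  | F : Expr A
  | atom : A → Expr A
  | cond : Expr A → Expr A → Expr A → Expr A

namespace Expr

/-- Derivability from the axiom system CP_cl = CP + (CPmem) + (CL2):
the smallest congruence containing all substitution instances of the axioms. -/
inductive DerCl {A : Type} : Expr A → Expr A → Prop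
  | refl (P : Expr A) : DerCl P P
  | symm {P Q : Expr A} : DerCl P Q → DerCl Q P
  | trans {P Q R : Expr A} : DerCl P Q → DerCl Q R → DerCl P R
  | congr {P P' Q Q' R R' : Expr A} :
      DerCl P P' → DerCl Q Q' → DerCl R R' →
      DerCl (cond P Q R) (cond P' Q' R')
  | cp1 (x y : Expr A) : DerCl (cond x T y) x
  | cp2 (x y : Expr A) : DerCl (cond x F y) y
  | cp3 (x : Expr A) : DerCl (cond T x F) x
  | cp4 (x y z u v : Expr A) :
      DerCl (cond x (cond y z u) v) (cond (cond x y v) z (cond x u v))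
  | cpmem (x y z u v w : Expr A) :
      DerCl (cond x y (cond z u (cond v y w))) (cond x y (cond z u w))
  | cl2 (x y z u v w : Expr A) :
      DerCl (cond (cond x y z) u (cond v y w)) (cond (cond x u v) y (cond z u w))

/-- The set of atoms occurring in a conditional expression. -/
def atoms {A : Type} [DecidableEq A] : Expr A → Finset A
  | T => ∅
  | F => ∅
  | atom a => {a}
  | cond P Q R => atoms P ∪ atoms Q ∪ atoms R

/-- Mem-basic forms: T and F are mem-basic forms, and `P ◁ a ▷ Q` is a mem-basic form
whenever P and Q are mem-basic forms not containing the atom a. -/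
inductive IsMBF {A : Type} [DecidableEq A] : Expr A → Prop
  | T : IsMBF T
  | F : IsMBF F
  | cond {P Q : Expr A} (a : A) : IsMBF P → IsMBF Q →
      a ∉ atoms P → a ∉ atoms Q → IsMBF (cond P (atom a) Q)

/-- The shared alphabet α̃ of a basic form: α̃(T) = α̃(F) = ∅ and
α̃(P ◁ a ▷ Q) = {a} ∪ (α̃(P) ∩ α̃(Q)). -/
def sha {A : Type} [DecidableEq A] : Expr A → Finset A
  | cond P (atom a) Q => insert a (sha P ∩ sha Q)
  | _ => ∅

/-- Left a-reduction ℓ_a on basic forms. -/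
def lred {A : Type} [DecidableEq A] (a : A) : Expr A → Expr A
  | cond P (atom b) Q => if b = a then P else cond (lred a P) (atom b) (lred a Q)
  | e => e

/-- Right a-reduction r_a on basic forms. -/
def rred {A : Type} [DecidableEq A] (a : A) : Expr A → Expr A
  | cond P (atom b) Q => if b = a then Q else cond (rred a P) (atom b) (rred a Q)
  | e => e

end Expr

open Expr in
/-- If P is a mem-basic form over A and a ∈ α̃(P),
then CP_cl ⊢ P = ℓ_a(P) ◁ a ▷ r_a(P). -/
theorem stmt_1 {A : Type} [DecidableEq A] (P : Expr A) (a : A)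
    (hP : IsMBF P) (ha : a ∈ sha P) :
    DerCl P (Expr.cond (lred a P) (Expr.atom a) (rred a P)) := by
  induction hP with
  | T => simp [sha] at ha
  | F => simp [sha] at ha
  | cond b _ _ _ _ ihP ihQ =>
    by_cases h : b = a
    · subst h
      simpa [lred, rred] using DerCl.refl _
    · simp only [sha, Finset.mem_insert, Finset.mem_inter, Ne.symm h, false_or] at ha
      simp only [lred, rred, if_neg h]
      -- Both branches of `b` can be rewritten to have root `a`, and (CL2) then exchanges `b` and `a`.
      exact ((ihP ha.1).congr (DerCl.refl _) (ihQ ha.2)).trans (DerCl.cl2 _ _ _ _ _ _)
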